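/- arXiv:math/9807165 — 2 statements merged into one kernel-verified Lean document; each statement's English description precedes it below -/
import Mathlib

section
/- For n ≥ 3, let P_n be the digraph on vertices {1, …, n} consisting of the directed path 1→2→⋯→n together with a loop at each vertex, i.e., (i,j) ∈ E(P_n) iff j = i or j = i + 1. Then the catch leafage satisfies l*(P_n) = 2, while w(P(P_n)) = n − 1; hence w(P(D)) is not bounded by any function of l*(D). -/
/-- A subtree representation of a digraph with edge relation `E` on vertex type `V`
in a host graph `T` on vertex type `W`: each digraph vertex `v` gets a source set
`src v` and a sink set `snk v`, each inducing a connected (hence nonempty) subgraph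
of `T`, such that `E u v` holds iff `src u` meets `snk v`. -/
structure SubtreeRep {V W : Type} (E : V → V → Prop) (T : SimpleGraph W) where
  src : V → Set W
  snk : V → Set W
  src_connected : ∀ v, (T.induce (src v)).Connected
  snk_connected : ∀ v, (T.induce (snk v)).Connected
  rep : ∀ u v, E u v ↔ (src u ∩ snk v).Nonempty

/-- The set of leaves (vertices of degree 1) of a graph. -/
def treeLeaves {W : Type} (T : SimpleGraph W) : Set W :=
  {w | (T.neighborSet w).ncard = 1}

/-- The leafage of a digraph: the minimum number of leaves of a finite host tree in
which the digraph has a subtree representation. -/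
noncomputable def digLeafage {V : Type} (E : V → V → Prop) : ℕ :=
  sInf {k | ∃ (W : Type) (_ : Fintype W) (T : SimpleGraph W),
    T.IsTree ∧ Nonempty (SubtreeRep E T) ∧ (treeLeaves T).ncard = k}

/-- The catch leafage of a digraph: the minimum number of leaves of a finite host tree
in which the digraph has a subtree representation all of whose sink sets are single
vertices. -/
noncomputable def catchLeafage {V : Type} (E : V → V → Prop) : ℕ :=
  sInf {k | ∃ (W : Type) (_ : Fintype W) (T : SimpleGraph W) (R : SubtreeRep E T),
    T.IsTree ∧ (∀ v, ∃ x, R.snk v = {x}) ∧ (treeLeaves T).ncard = k}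

/-- `C` is between `A` and `B` in `T`: `A` and `B` are disjoint and the unique path of
`T` from `A` to `B` (i.e. the path meeting `A` only at its first vertex and `B` only
at its last vertex) contains a vertex of `C` (possibly an endpoint). -/
def Between {W : Type} (T : SimpleGraph W) (A B C : Set W) : Prop :=
  A ∩ B = ∅ ∧ ∃ (a b : W) (p : T.Walk a b), a ∈ A ∧ b ∈ B ∧ p.IsPath ∧
    (∀ x ∈ p.support, x ∈ A → x = a) ∧ (∀ x ∈ p.support, x ∈ B → x = b) ∧
    ∃ x ∈ C, x ∈ p.support

/-- An asteroidal collection of sets in `T`: pairwise disjoint, and no member is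
between two other members. -/
def Asteroidal {W ι : Type} (T : SimpleGraph W) (F : ι → Set W) : Prop :=
  (∀ i j, i ≠ j → F i ∩ F j = ∅) ∧
  ∀ i j k, i ≠ j → i ≠ k → j ≠ k → ¬ Between T (F i) (F j) (F k)

/-- The star `K_{1,n}`: the center `none` is adjacent to the `n` leaves `some i`. -/
def starGraph (n : ℕ) : SimpleGraph (Option (Fin n)) :=
  SimpleGraph.fromRel (fun a _ => a = none)

/-- A Ferrers digraph: the successor sets are linearly ordered by inclusion. -/
def IsFerrers {V : Type} (F : V → V → Prop) : Prop :=
  ∀ u u' : V, {v | F u v} ⊆ {v | F u' v} ∨ {v | F u' v} ⊆ {v | F u v}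

/-- The Ferrers dimension `f(D)`: the minimum number of Ferrers digraphs whose
intersection is `E`. -/
noncomputable def ferrersDim {V : Type} (E : V → V → Prop) : ℕ :=
  sInf {k | ∃ F : Fin k → V → V → Prop,
    (∀ i, IsFerrers (F i)) ∧ (∀ u v, E u v ↔ ∀ i, F i u v)}

/-- `f*(D)`: the minimum number of pairwise edge-disjoint Ferrers digraphs whose
union is the complement of `E` in `V × V`. -/
noncomputable def fstar {V : Type} (E : V → V → Prop) : ℕ :=
  sInf {k | ∃ F : Fin k → V → V → Prop,
    (∀ i, IsFerrers (F i)) ∧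
    (∀ i j, i ≠ j → ∀ u v, ¬ (F i u v ∧ F j u v)) ∧
    (∀ u v, ¬ E u v ↔ ∃ i, F i u v)}

/-- The width of the incidence poset `P(D)`: the maximum size of an antichain (under
inclusion) of predecessor sets of the digraph `E`. -/
noncomputable def incWidth {V : Type} (E : V → V → Prop) : ℕ :=
  sSup {k | ∃ A : Finset (Set V),
    (↑A : Set (Set V)) ⊆ Set.range (fun v => {u | E u v}) ∧
    IsAntichain (· ⊆ ·) (↑A : Set (Set V)) ∧ A.card = k}

/-- The digraph `D_n` with adjacency matrix `J - I`: all pairs of distinct vertices. -/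
def DnRel (n : ℕ) (i j : Fin n) : Prop := i ≠ j

/-- The digraph `E_n` with adjacency matrix `[[I, Y], [Yᵀ, 0]]` (vertex `n-1` playing
the role of the last row/column). -/
def EnRel (n : ℕ) (i j : Fin n) : Prop :=
  (i.val < n - 1 ∧ j.val < n - 1 ∧ i = j) ∨
  (i.val < n - 1 ∧ j.val = n - 1) ∨
  (i.val = n - 1 ∧ j.val < n - 1)

/-- The digraph `C_n`: a directed `n`-cycle plus a loop at each vertex. -/
def CnRel (n : ℕ) (i j : Fin n) : Prop := j = i ∨ j.val = (i.val + 1) % n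

/-- The digraph `M_{k,m}` on `Fin k × Fin m`: identity diagonal blocks, all-ones
blocks above the diagonal, all-zeros blocks below. -/
def MkmRel (k m : ℕ) (p q : Fin k × Fin m) : Prop :=
  p.1 < q.1 ∨ (p.1 = q.1 ∧ p.2 = q.2)

/-- The digraph `F_n` with adjacency matrix `[[I, Y], [Yᵀ, 1]]` (vertex `n-1` playing
the role of the last row/column). -/
def FnRel (n : ℕ) (i j : Fin n) : Prop := i = j ∨ i.val = n - 1 ∨ j.val = n - 1

/-- The digraph `P_n`: a directed path `1 → 2 → ⋯ → n` plus a loop at each vertex. -/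
def PnRel (n : ℕ) (i j : Fin n) : Prop := j = i ∨ j.val = i.val + 1

/-! The predecessor sets of `P_n` are `{1}` and the consecutive pairs `{i, i + 1}`. The `n - 1`
pairs form an antichain, and `{1} ⊂ {1, 2}` keeps an antichain from using all `n` sets. The
successor sets are intervals, so on the path `1 - 2 - ⋯ - n` they are source subtrees for the sinks
`{j}`. Since `P_n` is not complete, every host tree has at least two vertices, hence two leaves. -/

section HasseDiagram

open SimpleGraph

theorem isBridge_hasse_of_covBy {α : Type*} [LinearOrder α] {a b : α} (hab : a ⋖ b) :
    (hasse α).IsBridge s(a, b) := by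
  rw [isBridge_iff, reachable_iff_reflTransGen]
  -- `a ⋖ b` is the only edge leaving the initial segment below `a`.
  have le_of_reach {x : α}
      (hx : Relation.ReflTransGen ((hasse α).deleteEdges {s(a, b)}).Adj a x) : x ≤ a := by
    induction hx with
    | refl => exact le_rfl
    | @tail x y _ hxy hxa =>
      rw [deleteEdges_adj, hasse_adj, Set.mem_singleton_iff] at hxy
      obtain ⟨hxy | hyx, hedge⟩ := hxy
      · have hax : x ≠ a := by
          rintro rfl
          exact hedge (by rw [hxy.unique_right hab])
        exact hxy.ge_of_gt (hxa.lt_of_ne hax)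
      · exact hyx.le.trans hxa
  exact fun hb => (le_of_reach hb).not_gt hab.lt

theorem isAcyclic_hasse (α : Type*) [LinearOrder α] : (hasse α).IsAcyclic := by
  rw [isAcyclic_iff_forall_adj_isBridge]
  rintro a b (hab | hba)
  · exact isBridge_hasse_of_covBy hab
  · rw [Sym2.eq_swap]
    exact isBridge_hasse_of_covBy hba

theorem isTree_hasse (α : Type*) [LinearOrder α] [SuccOrder α] [IsSuccArchimedean α] [Nonempty α] :
    (hasse α).IsTree :=
  ⟨⟨hasse_preconnected_of_succ α⟩, isAcyclic_hasse α⟩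

theorem connected_induce_hasse {α : Type*} [LinearOrder α] [SuccOrder α]
    [IsSuccArchimedean α] {s : Set α} (hs : s.OrdConnected) (hne : s.Nonempty) :
    ((hasse α).induce s).Connected := by
  have := hne.to_subtype
  have induce_eq : (hasse α).induce s = hasse s := by
    ext a b
    have covBy_iff (a b : s) : (a : α) ⋖ b ↔ a ⋖ b :=
      Set.OrdConnected.apply_covBy_apply_iff (OrderEmbedding.subtype (· ∈ s))
        (by simpa using! hs)
    simp only [comap_adj, hasse_adj, Function.Embedding.subtype_apply, covBy_iff]
  rw [induce_eq]
  exact ⟨hasse_preconnected_of_succ s⟩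

theorem treeLeaves_hasse_subset (α : Type) [PartialOrder α] [BoundedOrder α] [SuccOrder α]
    [PredOrder α] : treeLeaves (hasse α) ⊆ {⊥, ⊤} := by
  intro w hw
  by_contra hne
  simp only [Set.mem_insert_iff, Set.mem_singleton_iff, not_or] at hne
  have hpred : Order.pred w ⋖ w := Order.pred_covBy_of_not_isMin (mt IsMin.eq_bot hne.1)
  have hsucc : w ⋖ Order.succ w := Order.covBy_succ_of_not_isMax (mt IsMax.eq_top hne.2)
  obtain ⟨a, ha⟩ := Set.ncard_eq_one.mp hw
  have eq_of_adj {x : α} (hx : (hasse α).Adj w x) : x = a := by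
    rwa [← mem_neighborSet, ha] at hx
  exact (hpred.lt.trans hsucc.lt).ne
    ((eq_of_adj (Or.inr hpred)).trans (eq_of_adj (Or.inl hsucc)).symm)

end HasseDiagram

theorem two_le_ncard_treeLeaves {W : Type} [Finite W] [Nontrivial W]
    {T : SimpleGraph W} (hT : T.IsTree) : 2 ≤ (treeLeaves T).ncard := by
  classical
  have := Fintype.ofFinite W
  obtain ⟨u, v, huv, hu, hv⟩ := hT.exists_ne_and_degree_eq_one
  have mem_treeLeaves {w : W} (hw : T.degree w = 1) : w ∈ treeLeaves T := by
    rw [treeLeaves, Set.mem_ofPred_eq, Set.ncard_eq_toFinset_card', Set.toFinset_card,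
      T.card_neighborSet_eq_degree, hw]
  rw [← Set.ncard_pair huv]
  exact Set.ncard_le_ncard (Set.pair_subset (mem_treeLeaves hu) (mem_treeLeaves hv))

section CatchLeafage

variable {V W : Type} {E : V → V → Prop}

theorem SubtreeRep.nontrivial_of_not_rel {T : SimpleGraph W} (R : SubtreeRep E T) {u v : V}
    (huv : ¬ E u v) : Nontrivial W := by
  obtain ⟨x, hx⟩ := (R.src_connected u).nonempty
  obtain ⟨y, hy⟩ := (R.snk_connected v).nonempty
  refine ⟨x, y, ?_⟩
  rintro rfl
  exact huv ((R.rep u v).mpr ⟨x, hx, hy⟩)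

/-- The representation of a digraph on a linear order whose successor sets are nonempty intervals:
the host is the Hasse diagram of the order, the successor set of `u` is the source set of `u`, and
`{v}` is the sink set of `v`. -/
def SubtreeRep.ofSuccessorIntervals [LinearOrder V] [SuccOrder V] [IsSuccArchimedean V]
    (hne : ∀ u, {v | E u v}.Nonempty) (hord : ∀ u, {v | E u v}.OrdConnected) :
    SubtreeRep E (SimpleGraph.hasse V) where
  src u := {v | E u v}
  snk v := {v}
  src_connected u := connected_induce_hasse (hord u) (hne u)
  snk_connected v := connected_induce_hasse Set.ordConnected_singleton (Set.singleton_nonempty v)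
  rep u v := by rw [Set.inter_singleton_nonempty, Set.mem_ofPred_eq]

theorem catchLeafage_eq_two_of_ordConnected [Finite V] [LinearOrder V]
    (hne : ∀ u, {v | E u v}.Nonempty) (hord : ∀ u, {v | E u v}.OrdConnected)
    {u v : V} (huv : ¬ E u v) : catchLeafage E = 2 := by
  classical
  have := Fintype.ofFinite V
  have : Nonempty V := ⟨u⟩
  let := Fintype.toBoundedOrder V
  let := SuccOrder.ofLinearWellFoundedLT V
  let := PredOrder.ofLinearWellFoundedGT V
  let R := SubtreeRep.ofSuccessorIntervals hne hord
  have hT := isTree_hasse V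
  have : Nontrivial V := R.nontrivial_of_not_rel huv
  have hleaves : (treeLeaves (SimpleGraph.hasse V)).ncard = 2 := by
    refine le_antisymm ?_ (two_le_ncard_treeLeaves hT)
    rw [← Set.ncard_pair (bot_ne_top (α := V))]
    exact Set.ncard_le_ncard (treeLeaves_hasse_subset V)
  refine IsLeast.csInf_eq ⟨⟨V, inferInstance, _, R, hT, fun v => ⟨v, rfl⟩, hleaves⟩, ?_⟩
  rintro k ⟨W, _, T, R', hT', _, rfl⟩
  have := R'.nontrivial_of_not_rel huv
  exact two_le_ncard_treeLeaves hT'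

end CatchLeafage

section IncidencePoset

variable {V : Type} {E : V → V → Prop}

/-- The predecessor set `N⁻(v)` of a vertex, an element of the incidence poset `P(D)`. -/
def predSet (E : V → V → Prop) (v : V) : Set V := {u | E u v}

theorem card_le_incWidth [Finite V] {ι : Type*} [Fintype ι] (f : ι → V)
    (hf : ∀ i j, predSet E (f i) ⊆ predSet E (f j) → i = j) : Fintype.card ι ≤ incWidth E := by
  classical
  have := Fintype.ofFinite V
  have hinj : Function.Injective fun i => predSet E (f i) := fun i j h => hf i j h.subset
  refine le_csSup ⟨Fintype.card (Set V), ?_⟩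
    ⟨Finset.univ.image fun i => predSet E (f i), ?_, ?_, Finset.card_image_of_injective _ hinj⟩
  · rintro _ ⟨A, _, _, rfl⟩
    exact A.card_le_univ
  · rw [Finset.coe_image, Finset.coe_univ, Set.image_univ]
    exact Set.range_comp_subset_range f (predSet E)
  · rw [Finset.coe_image, Finset.coe_univ, Set.image_univ]
    rintro _ ⟨i, rfl⟩ _ ⟨j, rfl⟩ hne hij
    exact hne (by rw [hf i j hij])

theorem incWidth_le_card_sub_one [Fintype V] {v w : V} (hvw : v ≠ w)
    (hsub : predSet E v ⊆ predSet E w) : incWidth E ≤ Fintype.card V - 1 := by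
  classical
  apply csSup_le'
  rintro _ ⟨A, hA, hanti, rfl⟩
  obtain ⟨x, hx⟩ : ∃ x, ∀ s ∈ A, ∃ y ≠ x, predSet E y = s := by
    by_cases hw : predSet E w ∈ A
    · refine ⟨v, fun s hs => ?_⟩
      obtain ⟨y, rfl⟩ := hA hs
      obtain rfl | hyv := eq_or_ne y v
      · exact ⟨w, hvw.symm, (hanti.eq hs hw hsub).symm⟩
      · exact ⟨y, hyv, rfl⟩
    · refine ⟨w, fun s hs => ?_⟩
      obtain ⟨y, rfl⟩ := hA hs
      exact ⟨y, fun hyw => hw (hyw ▸ hs), rfl⟩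
  have himage : A ⊆ (Finset.univ.erase x).image (predSet E) := fun s hs => by
    obtain ⟨y, hyx, rfl⟩ := hx s hs
    exact Finset.mem_image_of_mem _ (Finset.mem_erase.mpr ⟨hyx, Finset.mem_univ y⟩)
  calc A.card ≤ ((Finset.univ.erase x).image (predSet E)).card := Finset.card_le_card himage
    _ ≤ (Finset.univ.erase x).card := Finset.card_image_le
    _ = Fintype.card V - 1 := Finset.card_erase_of_mem (Finset.mem_univ x)

end IncidencePoset

section DirectedPath

theorem ordConnected_setOf_PnRel {n : ℕ} (i : Fin n) : {j | PnRel n i j}.OrdConnected := by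
  refine ⟨fun x hx y hy z hz => ?_⟩
  simp only [Set.mem_ofPred_eq, Set.mem_Icc, PnRel, Fin.ext_iff, Fin.le_def] at *
  lia

theorem catchLeafage_PnRel {n : ℕ} (hn : 3 ≤ n) : catchLeafage (PnRel n) = 2 := by
  have not_rel : ¬ PnRel n ⟨0, by lia⟩ ⟨2, by lia⟩ := by simp [PnRel]
  exact catchLeafage_eq_two_of_ordConnected (fun i => ⟨i, Or.inl rfl⟩) ordConnected_setOf_PnRel
    not_rel

theorem predSet_PnRel_zero (n : ℕ) : predSet (PnRel (n + 1)) 0 = {0} := by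
  ext u
  simp [predSet, PnRel, eq_comm]

theorem predSet_PnRel_succ {n : ℕ} (i : Fin n) :
    predSet (PnRel (n + 1)) i.succ = {i.castSucc, i.succ} := by
  ext u
  simp only [predSet, PnRel, Set.mem_ofPred_eq, Set.mem_insert_iff, Set.mem_singleton_iff,
    Fin.ext_iff, Fin.val_succ, Fin.val_castSucc]
  lia

theorem eq_of_predSet_PnRel_succ_subset {n : ℕ} (i j : Fin n)
    (h : predSet (PnRel (n + 1)) i.succ ⊆ predSet (PnRel (n + 1)) j.succ) : i = j := by
  simp only [predSet_PnRel_succ, Set.pair_subset_iff, Set.mem_insert_iff, Set.mem_singleton_iff,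
    Fin.ext_iff, Fin.val_succ, Fin.val_castSucc] at h
  lia

theorem incWidth_PnRel {n : ℕ} (hn : 2 ≤ n) : incWidth (PnRel n) = n - 1 := by
  obtain ⟨m, rfl⟩ := Nat.exists_eq_add_of_le' hn
  apply le_antisymm
  · have zero_subset_one : predSet (PnRel (m + 2)) 0 ⊆ predSet (PnRel (m + 2)) (Fin.succ 0) := by
      rw [predSet_PnRel_zero, predSet_PnRel_succ, Fin.castSucc_zero, Set.singleton_subset_iff]
      exact Set.mem_insert _ _
    simpa using incWidth_le_card_sub_one (Fin.succ_ne_zero 0).symm zero_subset_one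
  · simpa using card_le_incWidth Fin.succ (eq_of_predSet_PnRel_succ_subset (n := m + 1))

end DirectedPath

/-- For `n ≥ 3`, the directed path with loops `P_n` satisfies
`l*(P_n) = 2` while `w(P(P_n)) = n - 1`; hence `w(P(D))` is not bounded by any
function of `l*(D)`. -/
theorem stmt_18 (n : ℕ) (hn : 3 ≤ n) :
    catchLeafage (PnRel n) = 2 ∧ incWidth (PnRel n) = n - 1 ∧
    ∀ g : ℕ → ℕ, ∃ (V : Type) (_ : Fintype V) (E : V → V → Prop),
      g (catchLeafage E) < incWidth E := by
  refine ⟨catchLeafage_PnRel hn, incWidth_PnRel (by lia), fun g => ?_⟩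
  refine ⟨Fin (g 2 + 3), inferInstance, PnRel (g 2 + 3), ?_⟩
  rw [catchLeafage_PnRel (by lia), incWidth_PnRel (by lia)]
  lia
end

section
/- For n ≥ 3, let C_n be the digraph on vertices {1, …, n} consisting of the directed cycle 1→2→⋯→n→1 together with a loop at each vertex, i.e., (i,j) ∈ E(C_n) iff j = i or j ≡ i+1 (mod n). Then l(C_n) = l*(C_n) = w(P(C_n)) = n; in particular, equality l*(D) = w(P(D)) can hold even though the incidence poset P(C_n) has no unique maximal element (its elements form an antichain of size n). -/
/-!
In a tree, pairwise meeting subtrees have a common vertex. Applied to two consecutive members of a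
cyclic sequence of subtrees and to the union of the remaining ones, this puts every two consecutive
members into a triangle.

Consider a representation of `C_n` and list its subtrees cyclically as `X_0, X_1, X_2, …`, namely
`T_0, S_0, T_1, …`. Consecutive subtrees meet, and a source set meets only the two sink sets next
to it. So in a triangle containing two consecutive subtrees, the third one is also next to one of
them. This makes some `X_k` meet `X_{k+2}`; discarding `X_{k+1}` from the cycle and looking at the
triangle on `X_{k+2}, X_{k+3}` then makes `X_{k+2}`, `X_{k+3}`, `X_{k+4}` share a vertex, and so
on around the cycle. The `n` common vertices obtained are such that each of them is avoided by a
subtree containing all the others, which forces `n` leaves.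
-/

open SimpleGraph

section Subtrees

variable {W : Type*} {T : SimpleGraph W}

theorem bypass_eq_of_isPath [DecidableEq W] (hT : T.IsAcyclic) {x y : W} {p : T.Walk x y}
    (hp : p.IsPath) (q : T.Walk x y) : q.bypass = p :=
  congrArg Subtype.val ((hT.subsingleton_path x y).elim ⟨q.bypass, q.bypass_isPath⟩ ⟨p, hp⟩)

theorem support_subset_of_isPath (hT : T.IsAcyclic) {x y : W} {p : T.Walk x y} (hp : p.IsPath)
    (q : T.Walk x y) : p.support ⊆ q.support := by
  classical
  exact bypass_eq_of_isPath hT hp q ▸ q.support_bypass_subset_support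

theorem edges_subset_of_isPath (hT : T.IsAcyclic) {x y : W} {p : T.Walk x y} (hp : p.IsPath)
    (q : T.Walk x y) : p.edges ⊆ q.edges := by
  classical
  exact bypass_eq_of_isPath hT hp q ▸ q.edges_bypass_subset_edges

theorem exists_walk_support_subset {A : Set W} (hA : (T.induce A).Preconnected) {x y : W}
    (hx : x ∈ A) (hy : y ∈ A) : ∃ p : T.Walk x y, ∀ w ∈ p.support, w ∈ A := by
  obtain ⟨q⟩ := hA ⟨x, hx⟩ ⟨y, hy⟩
  refine ⟨q.map (Embedding.induce A).toHom, fun w hw => ?_⟩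
  obtain ⟨z, -, rfl⟩ := List.mem_map.1 (q.support_map _ ▸ hw)
  exact z.2

theorem helly_of_isAcyclic (hT : T.IsAcyclic) {A B C : Set W} (hA : (T.induce A).Preconnected)
    (hB : (T.induce B).Preconnected) (hC : (T.induce C).Preconnected) (hAB : (A ∩ B).Nonempty)
    (hBC : (B ∩ C).Nonempty) (hAC : (A ∩ C).Nonempty) : (A ∩ B ∩ C).Nonempty := by
  classical
  obtain ⟨x, hxA, hxB⟩ := hAB
  obtain ⟨y, hyB, hyC⟩ := hBC
  obtain ⟨z, hzA, hzC⟩ := hAC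
  by_cases hyA : y ∈ A
  · exact ⟨y, ⟨hyA, hyB⟩, hyC⟩
  obtain ⟨p, hpB⟩ := exists_walk_support_subset hB hxB hyB
  obtain ⟨q, hqA⟩ := exists_walk_support_subset hA hxA hzA
  obtain ⟨r, hrC⟩ := exists_walk_support_subset hC hzC hyC
  -- The edge on which the path from `x` to `y` leaves `A` is not in `q`, hence it is in `r`.
  obtain ⟨d, hd, hdA, hdA'⟩ := p.bypass.exists_boundary_dart A hxA hyA
  have hdB : d.fst ∈ B := hpB _ <|
    p.support_bypass_subset_support <| p.bypass.dart_fst_mem_support_of_mem_darts hd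
  have hd_edge : s(d.fst, d.snd) ∈ (q.append r).edges :=
    edges_subset_of_isPath hT p.bypass_isPath _ (List.mem_map_of_mem hd)
  rw [Walk.edges_append, List.mem_append] at hd_edge
  have hd_r : s(d.fst, d.snd) ∈ r.edges :=
    hd_edge.resolve_left fun h => hdA' (hqA _ (q.snd_mem_support_of_mem_edges h))
  exact ⟨d.fst, ⟨hdA, hdB⟩, hrC _ (r.fst_mem_support_of_mem_edges hd_r)⟩

theorem connected_induce_accumulate {Y : ℕ → Set W} (hY : ∀ i, (T.induce (Y i)).Connected)
    (hmeet : ∀ i, (Y i ∩ Y (i + 1)).Nonempty) (m : ℕ) :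
    (T.induce (Set.accumulate Y m)).Connected := by
  induction m with
  | zero => rw [Set.accumulate_zero_nat]; exact hY 0
  | succ m ih =>
    rw [Set.accumulate_succ]
    exact induce_union_connected ih.preconnected (hY (m + 1)).preconnected
      ((hmeet m).mono (Set.inter_subset_inter_left _ (Set.subset_accumulate (s := Y))))

theorem exists_inter_nonempty_of_cycle (hT : T.IsAcyclic) {A B : Set W} {Y : ℕ → Set W}
    (hA : (T.induce A).Preconnected) (hB : (T.induce B).Preconnected)
    (hY : ∀ i, (T.induce (Y i)).Connected) (hAB : (A ∩ B).Nonempty) (hBY : (B ∩ Y 0).Nonempty)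
    (hmeet : ∀ i, (Y i ∩ Y (i + 1)).Nonempty) {m : ℕ} (hAY : (A ∩ Y m).Nonempty) :
    ∃ i ≤ m, (A ∩ B ∩ Y i).Nonempty := by
  have hsub : ∀ i ≤ m, Y i ⊆ Set.accumulate Y m := fun i hi =>
    Set.subset_accumulate.trans (Set.monotone_accumulate hi)
  obtain ⟨w, hw, hwY⟩ := helly_of_isAcyclic hT hA hB
    (connected_induce_accumulate hY hmeet m).preconnected hAB
    (hBY.mono (Set.inter_subset_inter_right _ (hsub 0 m.zero_le)))
    (hAY.mono (Set.inter_subset_inter_right _ (hsub m le_rfl)))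
  obtain ⟨i, hi, hwi⟩ := Set.mem_accumulate.1 hwY
  exact ⟨i, hi, w, hw, hwi⟩

end Subtrees

section Leaves

variable {W : Type} {T : SimpleGraph W}

theorem exists_treeLeaves_forall_walk_mem_support_of_ne [Finite W] (hT : T.IsTree)
    {x z : W} (hxz : x ≠ z) : ∃ l ∈ treeLeaves T, ∀ p : T.Walk l z, x ∈ p.support := by
  choose f hf using fun l => hT.connected.exists_isPath l z
  -- A vertex farthest from `z` among those beyond `x` is a leaf.
  obtain ⟨l, hl, hmax⟩ := Set.exists_max_image {l | x ∈ (f l).support}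
    (fun l => (f l).length) (Set.toFinite _) ⟨x, (f x).start_mem_support⟩
  refine ⟨l, ?_, fun p => support_subset_of_isPath hT.isAcyclic (hf l) p hl⟩
  have hlz : l ≠ z := by
    rintro rfl
    rw [Set.mem_ofPred_eq, Walk.nil_iff_support_eq.1 (Walk.isPath_iff_nil.1 (hf l)),
      List.mem_singleton] at hl
    exact hxz hl
  have hnbr : ∀ m, T.Adj l m → m = (f l).snd := by
    intro m hm
    by_contra hne
    have hm_notMem : m ∉ (f l).support := fun h =>
      hne (hT.isAcyclic.eq_snd_of_adj_start (hf l) hm h)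
    have hfm : f m = .cons hm.symm (f l) :=
      (hT.existsUnique_path m z).unique (hf m) ((hf l).cons hm_notMem)
    have hle : (f m).length ≤ (f l).length := hmax m <| by
      rw [Set.mem_ofPred_eq, hfm, Walk.support_cons]
      exact List.mem_cons_of_mem _ hl
    rw [hfm, Walk.length_cons] at hle
    lia
  exact Set.ncard_eq_one.2 ⟨(f l).snd, Set.eq_singleton_iff_unique_mem.2
    ⟨(f l).adj_snd (Walk.not_nil_of_ne hlz), hnbr⟩⟩

theorem exists_treeLeaves_forall_walk_mem_support_of_notMem [Finite W] (hT : T.IsTree) {Z : Set W}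
    (hZ : (T.induce Z).Connected) {x : W} (hx : x ∉ Z) :
    ∃ l ∈ treeLeaves T, ∀ z ∈ Z, ∀ p : T.Walk l z, x ∈ p.support := by
  obtain ⟨z₀, hz₀⟩ := hZ.nonempty
  obtain ⟨l, hl, hsep⟩ :=
    exists_treeLeaves_forall_walk_mem_support_of_ne hT (ne_of_mem_of_not_mem hz₀ hx).symm
  refine ⟨l, hl, fun z hz p => ?_⟩
  obtain ⟨q, hq⟩ := exists_walk_support_subset hZ.preconnected hz hz₀
  have hxpq := hsep (p.append q)
  rw [Walk.mem_support_append_iff] at hxpq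
  exact hxpq.resolve_right fun h => hx (hq x h)

theorem card_le_ncard_treeLeaves [Finite W] (hT : T.IsTree) {ι : Type*} (x : ι → W)
    (hx : ∀ k, ∃ Z, (T.induce Z).Connected ∧ x k ∉ Z ∧ ∀ j ≠ k, x j ∈ Z) :
    Nat.card ι ≤ (treeLeaves T).ncard := by
  classical
  choose Z hZ hxZ hZx using hx
  choose l hl hsep using fun k =>
    exists_treeLeaves_forall_walk_mem_support_of_notMem hT (hZ k) (hxZ k)
  have hinj : Function.Injective l := by
    intro j k hjk
    by_contra hne
    obtain ⟨p, hp⟩ := hT.connected.exists_isPath (l k) (x j)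
    have hxk : x k ∈ p.support := hsep k _ (hZx k j hne) p
    have hxj : ∀ q : T.Walk (l k) (x k), x j ∈ q.support :=
      hjk ▸ hsep j _ (hZx j k (Ne.symm hne))
    exact Walk.endpoint_notMem_support_takeUntil hp hxk
      (ne_of_mem_of_not_mem (hZx k j hne) (hxZ k)) (hxj _)
  calc Nat.card ι = (Set.range l).ncard := (Set.ncard_range_of_injective hinj).symm
    _ ≤ (treeLeaves T).ncard := Set.ncard_le_ncard (Set.range_subset_iff.2 hl) (Set.toFinite _)

theorem le_ncard_treeLeaves_of_periodic [Finite W] (hT : T.IsTree) {n : ℕ} (hn : 3 ≤ n)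
    {Y : ℕ → Set W} (hY : ∀ i, (T.induce (Y i)).Connected) (hper : Function.Periodic Y n)
    (hx : ∀ i, ∃ x ∈ Y i ∩ Y (i + 1), ∀ j < n - 2, x ∉ Y (i + 2 + j)) :
    n ≤ (treeLeaves T).ncard := by
  choose x hxY hxY' using hx
  have hmeet : ∀ i, (Y i ∩ Y (i + 1)).Nonempty := fun i => ⟨x i, hxY i⟩
  rw [← Nat.card_fin n]
  refine card_le_ncard_treeLeaves hT (fun k : Fin n => x k) fun k =>
    ⟨Set.accumulate (fun j => Y (k + 2 + j)) (n - 3),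
      connected_induce_accumulate (fun j => hY (k + 2 + j)) (fun j => hmeet (k + 2 + j)) _,
      ?_, fun j hjk => ?_⟩
  · rw [Set.mem_accumulate]
    rintro ⟨j, hj, hxj⟩
    exact hxY' k j (by lia) hxj
  · obtain ⟨d, hd, hdn, hxd, hxd'⟩ : ∃ d, 0 < d ∧ d < n ∧ x j ∈ Y (k + d) ∧
        x j ∈ Y (k + d + 1) := by
      rcases lt_or_gt_of_ne hjk with h | h
      · refine ⟨j + n - k, by lia, by lia, ?_⟩
        rw [show (k : ℕ) + (j + n - k) = j + n by lia, add_right_comm, hper, hper]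
        exact hxY j
      · refine ⟨j - k, by lia, by lia, ?_⟩
        rw [show (k : ℕ) + (j - k) = j by lia]
        exact hxY j
    rw [Set.mem_accumulate]
    rcases eq_or_lt_of_le (show 1 ≤ d from hd) with rfl | hd
    · exact ⟨0, Nat.zero_le _, hxd'⟩
    · exact ⟨d - 2, by lia, by rwa [show (k : ℕ) + 2 + (d - 2) = k + d by lia]⟩

end Leaves

/-- A cyclic sequence of `2n` subtrees of `T`, unrolled to a `2n`-periodic sequence `X`, in which
each subtree meets its two neighbours and is disjoint from all other subtrees of the opposite
parity. The sink and source sets of a representation of `C_n` alternate in such a sequence. -/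
structure AlternatingCycle {W : Type*} (T : SimpleGraph W) (n : ℕ) (X : ℕ → Set W) : Prop where
  connected : ∀ k, (T.induce (X k)).Connected
  periodic : Function.Periodic X (2 * n)
  meet_succ : ∀ k, (X k ∩ X (k + 1)).Nonempty
  disjoint : ∀ k l, k % 2 ≠ l % 2 → k + 1 < l → l + 1 < k + 2 * n → Disjoint (X k) (X l)

namespace AlternatingCycle

section Meet

variable {W : Type*} {T : SimpleGraph W} {n : ℕ} {X : ℕ → Set W}

theorem meet_add_two_or (h : AlternatingCycle T n X) (hT : T.IsAcyclic) (hn : 2 ≤ n) (k : ℕ) :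
    (X k ∩ X (k + 2)).Nonempty ∨ (X (k + 1) ∩ X (k + 3)).Nonempty := by
  have hlast : X (k + 3 + (2 * n - 3)) = X k := by
    rw [show k + 3 + (2 * n - 3) = k + 2 * n by lia, h.periodic]
  obtain ⟨i, hi, w, ⟨hw₁, hw₂⟩, hwi⟩ := exists_inter_nonempty_of_cycle hT
    (Y := fun i => X (k + 3 + i)) (m := 2 * n - 3) (h.connected (k + 1)).preconnected
    (h.connected (k + 2)).preconnected (fun i => h.connected _) (h.meet_succ (k + 1))
    (h.meet_succ (k + 2)) (fun i => h.meet_succ _)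
    (by rw [hlast, Set.inter_comm]; exact h.meet_succ k)
  rcases Nat.eq_zero_or_pos i with rfl | hi₀
  · exact .inr ⟨w, hw₁, hwi⟩
  rcases hi.eq_or_lt with rfl | hi
  · exact .inl ⟨w, hlast ▸ hwi, hw₂⟩
  rcases Nat.mod_two_eq_zero_or_one i with hpar | hpar
  · exact absurd hwi <| Set.disjoint_left.1
      (h.disjoint (k + 2) (k + 3 + i) (by lia) (by lia) (by lia)) hw₂
  · exact absurd hwi <| Set.disjoint_left.1
      (h.disjoint (k + 1) (k + 3 + i) (by lia) (by lia) (by lia)) hw₁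

theorem triangle_of_meet_add_two (h : AlternatingCycle T n X) (hT : T.IsAcyclic) (hn : 2 ≤ n)
    {k : ℕ} (hk : (X k ∩ X (k + 2)).Nonempty) :
    (X (k + 2) ∩ X (k + 3) ∩ X (k + 4)).Nonempty := by
  have hlast : X (k + 4 + (2 * n - 4)) = X k := by
    rw [show k + 4 + (2 * n - 4) = k + 2 * n by lia, h.periodic]
  obtain ⟨i, hi, w, ⟨hw₂, hw₃⟩, hwi⟩ := exists_inter_nonempty_of_cycle hT
    (Y := fun i => X (k + 4 + i)) (m := 2 * n - 4) (h.connected (k + 2)).preconnected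
    (h.connected (k + 3)).preconnected (fun i => h.connected _) (h.meet_succ (k + 2))
    (h.meet_succ (k + 3)) (fun i => h.meet_succ _)
    (by rwa [hlast, Set.inter_comm])
  rcases Nat.eq_zero_or_pos i with rfl | hi₀
  · exact ⟨w, ⟨hw₂, hw₃⟩, hwi⟩
  rcases Nat.mod_two_eq_zero_or_one i with hpar | hpar
  · exact absurd hwi <| Set.disjoint_left.1
      (h.disjoint (k + 3) (k + 4 + i) (by lia) (by lia) (by lia)) hw₃
  · exact absurd hwi <| Set.disjoint_left.1
      (h.disjoint (k + 2) (k + 4 + i) (by lia) (by lia) (by lia)) hw₂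

theorem exists_forall_triangle (h : AlternatingCycle T n X) (hT : T.IsAcyclic) (hn : 2 ≤ n) :
    ∃ k, ∀ i, (X (k + 2 * i) ∩ X (k + 2 * i + 1) ∩ X (k + 2 * i + 2)).Nonempty := by
  obtain ⟨k, hk⟩ : ∃ k, (X k ∩ X (k + 2)).Nonempty :=
    (h.meet_add_two_or hT hn 0).elim (fun h₀ => ⟨0, h₀⟩) fun h₁ => ⟨1, h₁⟩
  refine ⟨k + 2, fun i => ?_⟩
  induction i with
  | zero => exact h.triangle_of_meet_add_two hT hn hk
  | succ i ih =>
    exact h.triangle_of_meet_add_two hT hn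
      (ih.mono (Set.inter_subset_inter_left _ Set.inter_subset_left))

end Meet

theorem le_ncard_treeLeaves {W : Type} [Finite W] {T : SimpleGraph W} {n : ℕ} {X : ℕ → Set W}
    (h : AlternatingCycle T n X) (hT : T.IsTree) (hn : 3 ≤ n) : n ≤ (treeLeaves T).ncard := by
  obtain ⟨k, hk⟩ := h.exists_forall_triangle hT.isAcyclic (by lia)
  refine le_ncard_treeLeaves_of_periodic hT hn (Y := fun i => X (k + 2 * i))
    (fun i => h.connected _) (fun i => ?_) fun i => ?_
  · simpa only [mul_add, add_assoc] using h.periodic (k + 2 * i)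
  · obtain ⟨x, ⟨hx₀, hx₁⟩, hx₂⟩ := hk i
    exact ⟨x, ⟨hx₀, hx₂⟩, fun j hj => Set.disjoint_left.1
      (h.disjoint (k + 2 * i + 1) (k + 2 * (i + 2 + j)) (by lia) (by lia) (by lia)) hx₁⟩

end AlternatingCycle

section Leafage

variable {V : Type}

/-- The catch representation of an arbitrary digraph in the star whose leaves are the vertices
of the digraph. -/
def starRep (E : V → V → Prop) : SubtreeRep E (SimpleGraph.starGraph (none : Option V)) where
  src u := insert none (some '' {v | E u v})
  snk v := {some v}
  src_connected u :=
    have : Nonempty ↥(insert none (some '' {v | E u v})) := ⟨⟨none, Set.mem_insert _ _⟩⟩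
    Connected.of_isUniversal (v := ⟨none, Set.mem_insert _ _⟩) fun _ hw =>
      starGraph_center_adj fun h => hw (Subtype.ext h)
  snk_connected v := by simp
  rep u v := by simp

theorem treeLeaves_starGraph (hV : Nat.card V ≠ 1) :
    treeLeaves (SimpleGraph.starGraph (none : Option V)) = Set.range some := by
  have hnone : (SimpleGraph.starGraph (none : Option V)).neighborSet none = Set.range some := by
    ext (_ | _) <;> simp
  have hsome (v : V) : (SimpleGraph.starGraph none).neighborSet (some v) = {none} := by
    ext (_ | _) <;> simp
  ext (_ | v)
  · rw [treeLeaves, Set.mem_ofPred_eq, hnone,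
      Set.ncard_range_of_injective (Option.some_injective V)]
    simpa using hV
  · simp [treeLeaves, hsome]

theorem catchLeafage_le_card [Finite V] (E : V → V → Prop) (hV : Nat.card V ≠ 1) :
    catchLeafage E ≤ Nat.card V :=
  Nat.sInf_le ⟨Option V, Fintype.ofFinite _, _, starRep E, isTree_starGraph none,
    fun v => ⟨some v, rfl⟩, by
      rw [treeLeaves_starGraph hV, Set.ncard_range_of_injective (Option.some_injective V)]⟩

theorem digLeafage_le_catchLeafage [Finite V] (E : V → V → Prop) :
    digLeafage E ≤ catchLeafage E := by
  refine le_csInf ⟨_, Option V, Fintype.ofFinite _, _, starRep E, isTree_starGraph none,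
    fun v => ⟨some v, rfl⟩, rfl⟩ ?_
  rintro k ⟨W, hW, T, R, hT, -, hk⟩
  exact Nat.sInf_le ⟨W, hW, T, hT, ⟨R⟩, hk⟩

theorem le_digLeafage [Finite V] {E : V → V → Prop} {m : ℕ}
    (h : ∀ (W : Type) [Finite W] (T : SimpleGraph W), T.IsTree → SubtreeRep E T →
      m ≤ (treeLeaves T).ncard) : m ≤ digLeafage E := by
  refine le_csInf ⟨_, Option V, Fintype.ofFinite _, _, isTree_starGraph none, ⟨starRep E⟩, rfl⟩ ?_
  rintro k ⟨W, _, T, hT, ⟨R⟩, rfl⟩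
  exact h W T hT R

theorem incWidth_eq_ncard_of_isAntichain [Finite V] {E : V → V → Prop}
    (hE : IsAntichain (· ⊆ ·) (Set.range fun v => {u | E u v})) :
    incWidth E = (Set.range fun v => {u | E u v}).ncard := by
  have hfin := Set.finite_range fun v => {u | E u v}
  refine IsGreatest.csSup_eq ⟨⟨hfin.toFinset, by simp, by simpa using hE, ?_⟩, ?_⟩
  · exact (Set.ncard_eq_toFinset_card _ hfin).symm
  · rintro k ⟨A, hA, -, rfl⟩
    exact Set.ncard_coe_finset A ▸ Set.ncard_le_ncard hA hfin

end Leafage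

section DirectedCycle

variable {n : ℕ}

theorem CnRel_iff [NeZero n] {i j : Fin n} : CnRel n i j ↔ j = i ∨ j = i + 1 := by
  simp [CnRel, Fin.ext_iff, Fin.val_add]

theorem CnRel_ofNat_iff [NeZero n] {a b : ℕ} :
    CnRel n (Fin.ofNat n a) (Fin.ofNat n b) ↔ b ≡ a [MOD n] ∨ b ≡ a + 1 [MOD n] := by
  simp [CnRel, Fin.ext_iff, Nat.ModEq]

theorem eq_of_setOf_CnRel_subset (hn : 3 ≤ n) {v w : Fin n}
    (h : {u | CnRel n u v} ⊆ {u | CnRel n u w}) : v = w := by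
  have : NeZero n := ⟨by lia⟩
  have hv : w = v ∨ w = v + 1 := CnRel_iff.1 (h (CnRel_iff.2 (.inl rfl)))
  have hpred : w = v - 1 ∨ w = v := by
    simpa only [CnRel_iff, sub_add_cancel] using
      CnRel_iff.1 (h (CnRel_iff.2 (.inr (sub_add_cancel v 1).symm)))
  rcases hv with hv | hv
  · exact hv.symm
  rcases hpred with hpred | hpred
  · have htwo : (1 : Fin n) + 1 = 0 := by
      rw [← add_right_inj v, ← add_assoc, ← hv, hpred, sub_add_cancel, add_zero]
    simp [Fin.ext_iff, Fin.val_add, Nat.mod_eq_of_lt (show 1 < n by lia),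
      Nat.mod_eq_of_lt (show 2 < n by lia)] at htwo
  · exact hpred.symm

theorem isAntichain_range_setOf_CnRel (hn : 3 ≤ n) :
    IsAntichain (· ⊆ ·) (Set.range fun v => {u | CnRel n u v}) := by
  rintro _ ⟨v, rfl⟩ _ ⟨w, rfl⟩ hne hsub
  exact hne (congrArg (fun v => {u | CnRel n u v}) (eq_of_setOf_CnRel_subset hn hsub))

theorem ncard_range_setOf_CnRel (hn : 3 ≤ n) :
    (Set.range fun v => {u | CnRel n u v}).ncard = n := by
  rw [Set.ncard_range_of_injective fun v w h => eq_of_setOf_CnRel_subset hn h.subset,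
    Nat.card_fin]

/-- The sink and source sets of a representation of a digraph on `Fin n`, in the cyclic order
`T_0, S_0, T_1, S_1, …`. -/
def SubtreeRep.interleave [NeZero n] {E : Fin n → Fin n → Prop} {W : Type} {T : SimpleGraph W}
    (R : SubtreeRep E T) (k : ℕ) : Set W :=
  if k % 2 = 0 then R.snk (Fin.ofNat n (k / 2)) else R.src (Fin.ofNat n (k / 2))

theorem SubtreeRep.interleave_two_mul [NeZero n] {E : Fin n → Fin n → Prop} {W : Type}
    {T : SimpleGraph W} (R : SubtreeRep E T) (a : ℕ) :
    R.interleave (2 * a) = R.snk (Fin.ofNat n a) := by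
  simp [interleave]

theorem SubtreeRep.interleave_two_mul_add_one [NeZero n] {E : Fin n → Fin n → Prop} {W : Type}
    {T : SimpleGraph W} (R : SubtreeRep E T) (a : ℕ) :
    R.interleave (2 * a + 1) = R.src (Fin.ofNat n a) := by
  simp [interleave, Nat.mul_add_div]

theorem SubtreeRep.alternatingCycle_interleave [NeZero n] {W : Type} {T : SimpleGraph W}
    (R : SubtreeRep (CnRel n) T) : AlternatingCycle T n R.interleave where
  connected k := by
    obtain ⟨a, rfl | rfl⟩ := k.even_or_odd'
    · exact R.interleave_two_mul a ▸ R.snk_connected _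
    · exact R.interleave_two_mul_add_one a ▸ R.src_connected _
  periodic k := by
    simp [interleave, Nat.add_mul_div_left, Fin.ofNat]
  meet_succ k := by
    obtain ⟨a, rfl | rfl⟩ := k.even_or_odd'
    · rw [interleave_two_mul, interleave_two_mul_add_one, Set.inter_comm, ← R.rep, CnRel_ofNat_iff]
      exact .inl rfl
    · rw [show 2 * a + 1 + 1 = 2 * (a + 1) by ring, interleave_two_mul,
        interleave_two_mul_add_one, ← R.rep, CnRel_ofNat_iff]
      exact .inr rfl
  disjoint k l hkl hlt hlt' := by
    rw [Set.disjoint_iff_inter_eq_empty, ← Set.not_nonempty_iff_eq_empty]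
    obtain ⟨a, rfl | rfl⟩ := k.even_or_odd' <;> obtain ⟨b, rfl | rfl⟩ := l.even_or_odd'
    · lia
    · rw [interleave_two_mul, interleave_two_mul_add_one, Set.inter_comm, ← R.rep, CnRel_ofNat_iff]
      rintro (h | h) <;> have := h.add_le_of_lt (by lia) <;> lia
    · rw [interleave_two_mul, interleave_two_mul_add_one, ← R.rep, CnRel_ofNat_iff]
      rintro (h | h) <;> have := h.symm.add_le_of_lt (by lia) <;> lia
    · lia

theorem SubtreeRep.le_ncard_treeLeaves_of_CnRel (hn : 3 ≤ n) {W : Type} [Finite W]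
    {T : SimpleGraph W} (hT : T.IsTree) (R : SubtreeRep (CnRel n) T) :
    n ≤ (treeLeaves T).ncard := by
  have : NeZero n := ⟨by lia⟩
  exact R.alternatingCycle_interleave.le_ncard_treeLeaves hT hn

end DirectedCycle

/-- For `n ≥ 3`, the directed cycle with loops `C_n` satisfies
`l(C_n) = l*(C_n) = w(P(C_n)) = n`; moreover its predecessor sets form an antichain
of size `n` (so `P(C_n)` has no unique maximal element, yet `l* = w(P)`). -/
theorem stmt_19 (n : ℕ) (hn : 3 ≤ n) :
    digLeafage (CnRel n) = n ∧ catchLeafage (CnRel n) = n ∧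
    incWidth (CnRel n) = n ∧
    (Set.range (fun v => {u | CnRel n u v})).ncard = n ∧
    IsAntichain (· ⊆ ·) (Set.range (fun v => {u | CnRel n u v})) := by
  have hanti := isAntichain_range_setOf_CnRel hn
  have hcard := ncard_range_setOf_CnRel hn
  have hlower : n ≤ digLeafage (CnRel n) := le_digLeafage fun _ _ _ hT R =>
    R.le_ncard_treeLeaves_of_CnRel hn hT
  have hdig_catch : digLeafage (CnRel n) ≤ catchLeafage (CnRel n) := digLeafage_le_catchLeafage _
  have hupper : catchLeafage (CnRel n) ≤ n := by
    simpa only [Nat.card_fin] using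
      catchLeafage_le_card (CnRel n) (by rw [Nat.card_fin]; lia)
  exact ⟨(hdig_catch.trans hupper).antisymm hlower, hupper.antisymm (hlower.trans hdig_catch),
    (incWidth_eq_ncard_of_isAntichain hanti).trans hcard, hcard, hanti⟩
end
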